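/- Let ρ ∈ (0,1], T > 0, τ > N/(2m), and suppose Σ_n (A(n)+1)^{2τ} |φ_n|² ≤ C_φ < ∞. Then the series f²(x) = Σ_{n∈ℤ^N} φ_n E_{ρ,1}(−A(n)T^ρ) / (T^ρ E_{ρ,ρ+1}(−A(n)T^ρ)) e^{inx} converges absolutely and uniformly on 𝕋^N with ‖f²‖²_{C(𝕋^N)} ≤ (C/T^ρ) Σ_n (A(n)+1)^{2τ}|φ_n|². -/

import Mathlib

open Filter

/-- The two-parameter Mittag-Leffler function `E_{ρ,μ}(z) = Σ_{k=0}^∞ z^k / Γ(ρk+μ)`. -/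
noncomputable def mittagLeffler (ρ μ z : ℝ) : ℝ :=
  ∑' k : ℕ, z ^ k / Real.Gamma (ρ * k + μ)

/-- The character `x ↦ e^{i n·x}` on the `N`-dimensional torus, `n ∈ ℤ^N`. -/
noncomputable def charFun {N : ℕ} (n : Fin N → ℤ) (x : Fin N → ℝ) : ℂ :=
  Complex.exp (Complex.I * ∑ i, (n i : ℂ) * (x i : ℂ))

section aux
open PowerSeries Topology

/-- The power series of `(1 - X)^(-α)`. -/
noncomputable def mlR (α : ℝ) : PowerSeries ℝ := rescale (-1 : ℝ) (binomialSeries ℝ (-α))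

lemma mlR_add (α β : ℝ) : mlR (α + β) = mlR α * mlR β := by
  rw [mlR, neg_add, binomialSeries_add, map_mul]; rfl

lemma mlR_zero : mlR 0 = 1 := by simp [mlR]

lemma mlR_coeff (α : ℝ) (n : ℕ) :
    coeff n (mlR α) = ∏ i ∈ Finset.range n, (α + i) / (i + 1) := by
  have h1 : coeff n (mlR α) = Ring.multichoose α n := by
    rw [mlR, coeff_rescale, binomialSeries_coeff, Ring.choose_neg', smul_eq_mul, mul_one,
      Units.smul_def, Int.coe_negOnePow_natCast, zsmul_eq_mul]
    push_cast
    rw [← mul_assoc, ← mul_pow]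
    simp
  have h2 := Ring.factorial_nsmul_multichoose_eq_ascPochhammer α n
  rw [Polynomial.ascPochhammer_smeval_eq_eval, nsmul_eq_mul] at h2
  rw [h1, Finset.prod_div_distrib]
  have h3 : (∏ i ∈ Finset.range n, ((i : ℝ) + 1)) = (n.factorial : ℝ) := by
    rw [← Finset.prod_range_add_one_eq_factorial]; push_cast; rfl
  have h4 : (∏ i ∈ Finset.range n, (α + (i : ℝ))) = (ascPochhammer ℝ n).eval α := by
    induction n with
    | zero => simp
    | succ k ih => 
      rw [Finset.prod_range_succ, ascPochhammer_succ_eval]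
      have := Ring.factorial_nsmul_multichoose_eq_ascPochhammer α k
      rw [Polynomial.ascPochhammer_smeval_eq_eval, nsmul_eq_mul] at this
      congr 1
      clear * -
      induction k with
      | zero => simp
      | succ k ih => rw [Finset.prod_range_succ, ascPochhammer_succ_eval, ih]
  rw [h3, h4, eq_div_iff (by positivity), ← h2, mul_comm]

lemma mlR_coeff_nonneg {α : ℝ} (h : 0 ≤ α) (n : ℕ) : 0 ≤ coeff n (mlR α) := by
  rw [mlR_coeff]; exact Finset.prod_nonneg fun i _ => by positivity

lemma mlR_one_coeff (n : ℕ) : coeff n (mlR 1) = 1 := by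
  rw [mlR_coeff]; exact Finset.prod_eq_one fun i _ => by
    rw [add_comm]; exact div_self (by positivity)

lemma mlR_neg_coeff {ρ : ℝ} (h0 : 0 ≤ ρ) (h1 : ρ ≤ 1) (n : ℕ) :
    coeff (n + 1) (mlR (-ρ)) ≤ 0 := by
  rw [mlR_coeff, Finset.prod_range_succ']
  refine mul_nonpos_of_nonneg_of_nonpos (Finset.prod_nonneg fun i _ => ?_) ?_
  · push_cast
    have : (0:ℝ) ≤ i := by positivity
    exact div_nonneg (by linarith) (by positivity)
  · simp [h0]

lemma mlR_neg_one : mlR (-1) = 1 - X := by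
  have h := mlR_add 1 (-1)
  rw [add_neg_cancel, mlR_zero] at h
  have h2 : mlR 1 * (1 - X) = 1 := by
    have : mlR 1 = PowerSeries.mk 1 := by ext n; simp [mlR_one_coeff]
    rw [this]; exact mk_one_mul_one_sub_eq_one ℝ
  have h3 : mlR 1 ≠ 0 := by intro h0; rw [h0] at h2; simp at h2
  exact mul_left_cancel₀ h3 (h.symm.trans h2.symm)

lemma ps_nonneg {P G Q : PowerSeries ℝ} (h : P * G = Q) (hG0 : 0 < coeff 0 G)
    (hG : ∀ n, coeff (n + 1) G ≤ 0) (hQ : ∀ n, 0 ≤ coeff n Q) (n : ℕ) : 0 ≤ coeff n P := by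
  induction n using Nat.strong_induction_on with
  | _ n ih =>
    have h1 := congrArg (coeff n) h
    rw [coeff_mul, Finset.Nat.sum_antidiagonal_eq_sum_range_succ_mk, Finset.sum_range_succ] at h1
    have h2 : ∑ k ∈ Finset.range n, coeff k P * coeff (n - k) G ≤ 0 := by
      refine Finset.sum_nonpos fun k hk => ?_
      have hk := Finset.mem_range.1 hk
      obtain ⟨j, hj⟩ : ∃ j, n - k = j + 1 := ⟨n - k - 1, by omega⟩
      rw [hj]
      exact mul_nonpos_of_nonneg_of_nonpos (ih k hk) (hG j)
    simp only [Nat.sub_self] at h1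
    have h3 := hQ n
    have : 0 ≤ coeff n P * coeff 0 G := by linarith
    exact nonneg_of_mul_nonneg_left this hG0

lemma discrete_bound {ρ y : ℝ} (h0 : 0 ≤ ρ) (h1 : ρ ≤ 1) (hy : 0 ≤ y) (S : PowerSeries ℝ)
    (hS : S * (mlR (-ρ) + C y) = mlR (1 - ρ)) (n : ℕ) :
    0 ≤ coeff n S ∧ y * coeff n (mlR (ρ + 1)) * coeff n S ≤ 1 - coeff n S := by
  set G := mlR (-ρ) + C y with hGdef
  have hG0 : coeff 0 G = 1 + y := by
    simp [hGdef, mlR_coeff, -coeff_zero_eq_constantCoeff]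
  have hG0' : 0 < coeff 0 G := by rw [hG0]; linarith
  have hG : ∀ n, coeff (n + 1) G ≤ 0 := fun n => by
    have := mlR_neg_coeff h0 h1 n
    simpa [hGdef, coeff_C] using this
  have hSn : ∀ n, 0 ≤ coeff n S :=
    ps_nonneg hS hG0' hG (mlR_coeff_nonneg (by linarith))
  obtain ⟨H, hH⟩ : ∃ H : PowerSeries ℝ, H * G = 1 :=
    ⟨G⁻¹, PowerSeries.inv_mul_cancel _ (by
      rw [← coeff_zero_eq_constantCoeff_apply]; exact hG0'.ne')⟩
  have hHn : ∀ n, 0 ≤ coeff n H := ps_nonneg hH hG0' hG (fun n => by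
    rw [coeff_one]; split_ifs <;> norm_num)
  have hGne : G ≠ 0 := by intro h; rw [h] at hG0'; simp at hG0'
  have hD : S * (1 - X) = 1 - C y * H := by
    apply mul_right_cancel₀ hGne
    rw [← mlR_neg_one, sub_mul, mul_assoc (C y), hH, mul_right_comm, hS, ← mlR_add]
    rw [show (1 - ρ + -1) = -ρ by ring, hGdef]; ring
  have hanti : Antitone (fun n => coeff n S) := by
    refine antitone_nat_of_succ_le fun n => ?_
    have := congrArg (coeff (n + 1)) hD
    rw [mul_sub, mul_one, map_sub, map_sub, coeff_succ_mul_X, coeff_C_mul, coeff_one] at this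
    simp at this
    have h3 := mul_nonneg hy (hHn (n + 1))
    linarith
  refine ⟨hSn n, ?_⟩
  have hV : S + C y * (mlR ρ * S) = mlR 1 := by
    have : mlR ρ * (S * G) = mlR 1 := by
      rw [hS, ← mlR_add]; congr 1; ring
    rw [← this, hGdef]
    have h5 : mlR ρ * mlR (-ρ) = 1 := by rw [← mlR_add, add_neg_cancel, mlR_zero]
    linear_combination (-S) * h5
  have hVn := congrArg (coeff n) hV
  rw [map_add, coeff_C_mul, mlR_one_coeff] at hVn
  have hW : coeff n (mlR (ρ + 1)) * coeff n S ≤ coeff n (mlR ρ * S) := by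
    rw [mlR_add, coeff_mul, coeff_mul, Finset.sum_mul]
    refine Finset.sum_le_sum fun p hp => ?_
    rw [mlR_one_coeff, mul_one]
    refine mul_le_mul_of_nonneg_left (hanti ?_) (mlR_coeff_nonneg h0 _)
    have := Finset.HasAntidiagonal.mem_antidiagonal.1 hp
    omega
  have := mul_le_mul_of_nonneg_left hW hy
  rw [mul_assoc]; linarith

/-- `n^{-y} ∏_{i=1}^n (1+y/i)` with coefficient of `(1-X)^{-(y+1)}`. -/
noncomputable def mlw (y : ℝ) (n : ℕ) : ℝ := (n : ℝ) ^ (-y) * coeff n (mlR (y + 1))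

lemma mlw_nonneg {y : ℝ} (hy : 0 ≤ y) (n : ℕ) : 0 ≤ mlw y n :=
  mul_nonneg (by positivity) (mlR_coeff_nonneg (by linarith) _)

lemma mlw_succ_le {y : ℝ} (hy : 0 ≤ y) {n : ℕ} (hn : 1 ≤ n) : mlw y (n + 1) ≤ mlw y n := by
  have hn' : (0:ℝ) < n := by exact_mod_cast hn
  have hc := mlR_coeff_nonneg (show 0 ≤ y + 1 by linarith) n
  have h1 : coeff (n + 1) (mlR (y + 1)) = coeff n (mlR (y + 1)) * ((y + 1 + n) / (n + 1)) := by
    rw [mlR_coeff, mlR_coeff, Finset.prod_range_succ]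
  have key : ((n : ℝ) + 1) ^ (-y) * ((y + 1 + n) / (n + 1)) ≤ (n : ℝ) ^ (-y) := by
    have e1 : (y + 1 + n) / ((n:ℝ) + 1) = y / (n + 1) + 1 := by field_simp; ring
    rw [e1]
    have e2 : y / ((n:ℝ) + 1) + 1 ≤ Real.exp (y / (n + 1)) := Real.add_one_le_exp _
    have e3 : Real.log (n / (n + 1)) ≤ n / (n + 1) - 1 :=
      Real.log_le_sub_one_of_pos (by positivity)
    rw [Real.log_div (by positivity) (by positivity)] at e3
    have e4 : (n : ℝ) / (n + 1) - 1 = - (1 / (n + 1)) := by field_simp; ring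
    rw [e4] at e3
    calc ((n : ℝ) + 1) ^ (-y) * (y / (n + 1) + 1)
        ≤ ((n : ℝ) + 1) ^ (-y) * Real.exp (y / (n + 1)) := by gcongr
      _ = Real.exp (Real.log (n + 1) * (-y) + y / (n + 1)) := by
          rw [Real.rpow_def_of_pos (by positivity), Real.exp_add]
      _ ≤ Real.exp (Real.log n * (-y)) := by
          apply Real.exp_le_exp.2
          have := mul_le_mul_of_nonneg_left e3 hy
          have e5 : y / ((n:ℝ) + 1) = y * (1 / (n + 1)) := by ring
          rw [e5]; linarith
      _ = (n : ℝ) ^ (-y) := by rw [Real.rpow_def_of_pos hn']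
  rw [mlw, mlw, h1]; push_cast
  calc _ = ((n : ℝ) + 1) ^ (-y) * ((y + 1 + n) / (n + 1)) * coeff n (mlR (y + 1)) := by ring
    _ ≤ _ := by gcongr

lemma mlw_anti {y : ℝ} (hy : 0 ≤ y) {n m : ℕ} (hn : 1 ≤ n) (h : n ≤ m) : mlw y m ≤ mlw y n := by
  induction m, h using Nat.le_induction with
  | base => exact le_rfl
  | succ k hk ih => exact (mlw_succ_le hy (hn.trans hk)).trans ih

lemma mlw_tendsto {y : ℝ} (hy : 0 ≤ y) :
    Tendsto (mlw y) atTop (𝓝 (1 / Real.Gamma (y + 1))) := by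
  rcases hy.eq_or_lt with rfl | hy
  · have : mlw 0 = fun _ => 1 := by
      funext n; simp [mlw, mlR_one_coeff]
    rw [this]; simp
  · rw [Real.Gamma_add_one hy.ne']
    have h1 := (Real.GammaSeq_tendsto_Gamma y).const_mul y
    have h2 := h1.inv₀ (mul_pos hy (Real.Gamma_pos_of_pos hy)).ne'
    rw [one_div]
    refine h2.congr' ?_
    filter_upwards [eventually_gt_atTop 0] with n hn
    have hn' : (0:ℝ) < n := by exact_mod_cast hn
    have h3 : (∏ i ∈ Finset.range n, ((i : ℝ) + 1)) = (n.factorial : ℝ) := by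
      rw [← Finset.prod_range_add_one_eq_factorial]; push_cast; rfl
    rw [mlw, mlR_coeff, Real.GammaSeq, Finset.prod_div_distrib, h3, Finset.prod_range_succ',
      Real.rpow_neg hn'.le]
    have h4 : ∏ i ∈ Finset.range n, (y + 1 + (i:ℝ)) = ∏ k ∈ Finset.range n, (y + ((k + 1 : ℕ):ℝ)) :=
      Finset.prod_congr rfl fun i _ => by push_cast; ring
    rw [h4]
    have h5 : 0 < ∏ k ∈ Finset.range n, (y + ((k + 1 : ℕ):ℝ)) :=
      Finset.prod_pos fun i _ => by positivity
    have h6 : 0 < (n:ℝ) ^ y := by positivity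
    have h7 : (0:ℝ) < n.factorial := by positivity
    simp only [Nat.cast_zero, add_zero]
    field_simp

lemma mlR_summable {ρ q : ℝ} (hρ : 0 < ρ) (hq : 0 ≤ q) (hq1 : q < 1) (a : ℝ) (n : ℕ) :
    Summable fun k : ℕ => q ^ k * coeff n (mlR (ρ * k + a)) := by
  have hpoly : ∀ n : ℕ, ∃ p : Polynomial ℝ, ∀ k : ℕ, coeff n (mlR (ρ * k + a)) = p.eval (k : ℝ) := by
    intro n
    refine ⟨∏ i ∈ Finset.range n,
      (Polynomial.C ρ * Polynomial.X + Polynomial.C (a + i)) * Polynomial.C (1 / ((i : ℝ) + 1)), ?_⟩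
    intro k
    rw [mlR_coeff, Polynomial.eval_prod]
    refine Finset.prod_congr rfl fun i _ => ?_
    simp; ring
  obtain ⟨p, hp⟩ := hpoly n
  simp_rw [hp, Polynomial.eval_eq_sum, Polynomial.sum, Finset.mul_sum]
  refine summable_sum fun i _ => ?_
  have := (summable_pow_mul_geometric_of_norm_lt_one (R := ℝ) i (r := q)
    (by rwa [Real.norm_of_nonneg hq])).mul_left (p.coeff i)
  refine this.congr fun k => by ring

lemma mlS_eq {ρ q : ℝ} (hρ : 0 < ρ) (hq : 0 ≤ q) (hq1 : q < 1) :
    (PowerSeries.mk fun n => ∑' k : ℕ, (-q) ^ k * coeff n (mlR (ρ * k + 1))) *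
      (mlR (-ρ) + C q) = mlR (1 - ρ) := by
  have hs : ∀ a n, Summable fun k : ℕ => (-q) ^ k * coeff n (mlR (ρ * k + a)) := by
    intro a n
    refine Summable.of_norm ?_
    refine (mlR_summable hρ hq hq1 a n).norm.congr fun k => ?_
    simp
  ext n
  rw [mul_add, map_add, coeff_mul_C, coeff_mul, coeff_mk]
  simp_rw [coeff_mk, ← tsum_mul_right]
  rw [← Summable.tsum_finsetSum (fun i _ => (hs 1 _).mul_right _)]
  have h1 : ∀ k : ℕ, ∑ i ∈ Finset.HasAntidiagonal.antidiagonal n,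
      (-q) ^ k * coeff i.1 (mlR (ρ * k + 1)) * coeff i.2 (mlR (-ρ)) =
      (-q) ^ k * coeff n (mlR (ρ * k + (1 - ρ))) := by
    intro k
    rw [show ρ * k + (1 - ρ) = (ρ * k + 1) + -ρ by ring, mlR_add (ρ * k + 1) (-ρ), coeff_mul, Finset.mul_sum]
    exact Finset.sum_congr rfl fun i _ => by ring
  simp_rw [h1]
  rw [(hs (1 - ρ) n).tsum_eq_zero_add]
  have h2 : ∀ k : ℕ, (-q) ^ (k + 1) * coeff n (mlR (ρ * ((k + 1 : ℕ) : ℝ) + (1 - ρ))) =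
      - ((-q) ^ k * coeff n (mlR (ρ * k + 1)) * q) := by
    intro k
    rw [show ρ * ((k + 1 : ℕ) : ℝ) + (1 - ρ) = ρ * k + 1 by push_cast; ring]; ring
  simp_rw [h2]
  rw [tsum_neg]
  simp

lemma ml_facts {ρ t : ℝ} (hρ : 0 < ρ) (hρ1 : ρ ≤ 1) (ht : 0 ≤ t) :
    Summable (fun k : ℕ => (-t) ^ k / Real.Gamma (ρ * k + 1)) ∧
    0 ≤ mittagLeffler ρ 1 (-t) ∧
    t / Real.Gamma (ρ + 1) * mittagLeffler ρ 1 (-t) ≤ 1 - mittagLeffler ρ 1 (-t) := by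
  have hlim : Tendsto (fun n : ℕ => t * (n : ℝ) ^ (-ρ)) atTop (𝓝 0) := by
    simpa using ((tendsto_rpow_neg_atTop hρ).comp tendsto_natCast_atTop_atTop).const_mul t
  have hev : ∀ᶠ n : ℕ in atTop, t * (n : ℝ) ^ (-ρ) < 1 := hlim.eventually_lt_const one_pos
  obtain ⟨n₀, hn1, hn0⟩ : ∃ n₀ : ℕ, 1 ≤ n₀ ∧ t * (n₀ : ℝ) ^ (-ρ) < 1 :=
    ((eventually_ge_atTop 1).and hev).exists
  have hpow : ∀ (n k : ℕ), ((n : ℝ) ^ (-ρ)) ^ k = (n : ℝ) ^ (-(ρ * k)) := by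
    intro n k
    rw [← Real.rpow_natCast, ← Real.rpow_mul (by positivity)]; congr 1; ring
  have hterm : ∀ n k : ℕ, (t * (n : ℝ) ^ (-ρ)) ^ k * coeff n (mlR (ρ * k + 1)) =
      t ^ k * mlw (ρ * k) n := by
    intro n k; rw [mul_pow, hpow, mlw]; ring
  have hterm' : ∀ n k : ℕ, (-(t * (n : ℝ) ^ (-ρ))) ^ k * coeff n (mlR (ρ * k + 1)) =
      (-t) ^ k * mlw (ρ * k) n := by
    intro n k; rw [← neg_mul, mul_pow, hpow, mlw]; ring
  have hbs : Summable fun k : ℕ => t ^ k * mlw (ρ * k) n₀ :=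
    (mlR_summable hρ (by positivity) hn0 1 n₀).congr fun k => hterm n₀ k
  have hb : ∀ n, n₀ ≤ n → ∀ k : ℕ, ‖(-t) ^ k * mlw (ρ * k) n‖ ≤ t ^ k * mlw (ρ * k) n₀ := by
    intro n hn k
    rw [norm_mul, norm_pow, norm_neg, Real.norm_of_nonneg ht,
      Real.norm_of_nonneg (mlw_nonneg (by positivity) _)]
    exact mul_le_mul_of_nonneg_left (mlw_anti (by positivity) hn1 hn) (by positivity)
  have hpt : ∀ k : ℕ, Tendsto (fun n => (-t) ^ k * mlw (ρ * k) n) atTop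
      (𝓝 ((-t) ^ k / Real.Gamma (ρ * k + 1))) := by
    intro k
    have := (mlw_tendsto (show 0 ≤ ρ * (k:ℝ) by positivity)).const_mul ((-t) ^ k)
    rwa [mul_one_div] at this
  have hsum : Summable (fun k : ℕ => (-t) ^ k / Real.Gamma (ρ * k + 1)) := by
    refine Summable.of_norm_bounded hbs fun k => ?_
    refine le_of_tendsto (hpt k).norm ?_
    filter_upwards [eventually_ge_atTop n₀] with n hn using hb n hn k
  have hT : Tendsto (fun n : ℕ => ∑' k : ℕ, (-t) ^ k * mlw (ρ * k) n) atTop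
      (𝓝 (mittagLeffler ρ 1 (-t))) := by
    refine tendsto_tsum_of_dominated_convergence hbs hpt ?_
    filter_upwards [eventually_ge_atTop n₀] with n hn using hb n hn
  have hd : ∀ᶠ n : ℕ in atTop, 0 ≤ (∑' k : ℕ, (-t) ^ k * mlw (ρ * k) n) ∧
      t * mlw ρ n * (∑' k : ℕ, (-t) ^ k * mlw (ρ * k) n) ≤
        1 - (∑' k : ℕ, (-t) ^ k * mlw (ρ * k) n) := by
    filter_upwards [hev] with n hn
    have := discrete_bound hρ.le hρ1 (by positivity) _ (mlS_eq hρ (by positivity) hn) n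
    rw [coeff_mk] at this
    simp_rw [hterm'] at this
    refine ⟨this.1, ?_⟩
    have h2 := this.2
    rw [mlw]
    rw [← mul_assoc]; exact h2
  refine ⟨hsum, ge_of_tendsto hT (hd.mono fun n h => h.1), ?_⟩
  have := ((mlw_tendsto hρ.le).const_mul t).mul hT
  rw [mul_one_div] at this
  exact le_of_tendsto_of_tendsto this (hT.const_sub 1) (hd.mono fun n h => h.2)

lemma ml_ratio {ρ t : ℝ} (hρ : 0 < ρ) (hρ1 : ρ ≤ 1) (ht : 0 ≤ t) :
    0 < mittagLeffler ρ (ρ + 1) (-t) ∧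
    |mittagLeffler ρ 1 (-t)| ≤ Real.Gamma (ρ + 1) * mittagLeffler ρ (ρ + 1) (-t) := by
  have hΓ : 0 < Real.Gamma (ρ + 1) := Real.Gamma_pos_of_pos (by linarith)
  obtain ⟨hs, h0, h1⟩ := ml_facts hρ hρ1 ht
  rw [abs_of_nonneg h0]
  have hid : mittagLeffler ρ 1 (-t) = 1 - t * mittagLeffler ρ (ρ + 1) (-t) := by
    rw [mittagLeffler, hs.tsum_eq_zero_add, mittagLeffler, ← tsum_mul_left, sub_eq_add_neg,
      ← tsum_neg]
    congr 1
    · simp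
    · refine tsum_congr fun k => ?_
      rw [show ρ * ((k + 1 : ℕ) : ℝ) + 1 = ρ * k + (ρ + 1) by push_cast; ring]; ring
  rcases ht.eq_or_lt with rfl | ht
  · have e : mittagLeffler ρ (ρ + 1) (-0) = 1 / Real.Gamma (ρ + 1) := by
      rw [mittagLeffler, tsum_eq_single 0]
      · simp
      · intro k hk; simp [hk]
    rw [hid, e]
    refine ⟨by positivity, ?_⟩
    rw [mul_one_div_cancel hΓ.ne']; simp
  · have h2 : mittagLeffler ρ 1 (-t) ≤ Real.Gamma (ρ + 1) * mittagLeffler ρ (ρ + 1) (-t) := by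
      rw [show 1 - mittagLeffler ρ 1 (-t) = t * mittagLeffler ρ (ρ + 1) (-t) by linarith,
        div_mul_eq_mul_div, div_le_iff₀ hΓ, mul_assoc] at h1
      have := le_of_mul_le_mul_left h1 ht
      linarith
    refine ⟨?_, h2⟩
    rcases h0.eq_or_lt with h | h
    · rw [← h] at hid
      have : 0 < t * mittagLeffler ρ (ρ + 1) (-t) := by linarith
      exact pos_of_mul_pos_right this ht.le
    · exact pos_of_mul_pos_right (h.trans_le h2) hΓ.le

end aux

lemma lattice_summable (N : ℕ) (r : ℝ) (hr : r < -(N : ℝ)) :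
    Summable fun n : Fin N → ℤ => Real.sqrt (∑ i, ((n i : ℝ)) ^ 2) ^ r := by
  let b := (EuclideanSpace.basisFun (Fin N) ℝ).toBasis
  let L : Submodule ℤ (EuclideanSpace ℝ (Fin N)) := Submodule.span ℤ (Set.range b)
  have hrank : Module.finrank ℤ L = N := by
    rw [ZLattice.rank ℝ L]; simp
  have hs := ZLattice.summable_norm_rpow L r (by rw [hrank]; exact hr)
  have hmem : ∀ n : Fin N → ℤ, (WithLp.toLp 2 (fun i => (n i : ℝ)) : EuclideanSpace ℝ (Fin N)) ∈ L := by
    intro n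
    rw [b.mem_span_iff_repr_mem ℤ]
    intro i
    exact ⟨n i, by simp [b]⟩
  have hinj : Function.Injective (fun n : Fin N → ℤ =>
      (⟨WithLp.toLp 2 (fun i => (n i : ℝ)), hmem n⟩ : L)) := by
    intro n m h
    have h2 := congrArg Subtype.val h
    funext i
    have h3 := congrArg (fun v : EuclideanSpace ℝ (Fin N) => v i) h2
    simpa using h3
  refine (hs.comp_injective hinj).congr fun n => ?_
  simp [EuclideanSpace.norm_eq]

lemma weight_summable (N m : ℕ) (hm : 0 < m) (c₁ : ℝ) (hc₁ : 0 < c₁)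
    (A : (Fin N → ℤ) → ℝ) (hA0 : ∀ n, 0 ≤ A n)
    (hA : ∀ n, c₁ * Real.sqrt (∑ i, ((n i : ℝ)) ^ 2) ^ (m : ℕ) ≤ A n)
    (τ : ℝ) (hτ : (N : ℝ) / (2 * m) < τ) :
    Summable fun n => (A n + 1) ^ (-(2 * τ)) := by
  have hm' : (0:ℝ) < m := by exact_mod_cast hm
  have hτ0 : 0 < τ := lt_of_le_of_lt (by positivity) hτ
  have h1 : -(m * (2 * τ)) < -(N : ℝ) := by
    rw [div_lt_iff₀ (by positivity)] at hτ; linarith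
  have hs := (lattice_summable N _ h1).mul_left (c₁ ^ (-(2 * τ)))
  refine Summable.of_norm_bounded_eventually hs ?_
  refine (Set.finite_singleton (0 : Fin N → ℤ)).subset fun n hn => ?_
  by_contra hne
  apply hn
  have hpos : 0 < Real.sqrt (∑ i, ((n i : ℝ)) ^ 2) := by
    apply Real.sqrt_pos.2
    obtain ⟨i, hi⟩ := Function.ne_iff.1 hne
    refine Finset.sum_pos' (fun i _ => sq_nonneg _) ⟨i, Finset.mem_univ _, ?_⟩
    have : (n i : ℝ) ≠ 0 := by exact_mod_cast hi
    positivity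
  have hA1 : 0 < A n + 1 := by linarith [hA0 n]
  show ‖(A n + 1) ^ (-(2 * τ))‖ ≤ c₁ ^ (-(2 * τ)) * Real.sqrt (∑ i, ((n i : ℝ)) ^ 2) ^ (-(m * (2 * τ)))
  rw [Real.norm_of_nonneg (by positivity), show -((m:ℝ) * (2 * τ)) = m * -(2 * τ) by ring, Real.rpow_mul hpos.le,
    ← Real.mul_rpow hc₁.le (by positivity), Real.rpow_natCast]
  exact Real.rpow_le_rpow_of_nonpos (by positivity) (by linarith [hA n]) (by linarith)

lemma charFun_norm {N : ℕ} (n : Fin N → ℤ) (x : Fin N → ℝ) : ‖charFun n x‖ = 1 := by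
  rw [charFun]
  have : ∑ i, (n i : ℂ) * (x i : ℂ) = ((∑ i, (n i : ℝ) * x i : ℝ) : ℂ) := by push_cast; rfl
  rw [this, mul_comm, Complex.norm_exp_ofReal_mul_I]

lemma charFun_cont {N : ℕ} (n : Fin N → ℤ) : Continuous (charFun n) := by
  unfold charFun; fun_prop

lemma final_step {N : ℕ} (w : (Fin N → ℤ) → ℝ) (τ : ℝ) (hw : ∀ n, 0 < w n)
    (hws : Summable fun n => w n ^ (-(2 * τ))) (g : (Fin N → ℤ) → ℝ) (K : ℝ) (hK : 0 ≤ K)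
    (hg : ∀ n, |g n| ≤ K) (φ : (Fin N → ℤ) → ℂ)
    (hφ : Summable (fun n => w n ^ (2 * τ) * ‖φ n‖ ^ 2)) :
    (Summable fun n => ‖φ n * (g n : ℂ)‖) ∧
      ∃ f₂ : (Fin N → ℝ) → ℂ, Continuous f₂ ∧
        TendstoUniformly
          (fun (s : Finset (Fin N → ℤ)) (x : Fin N → ℝ) => ∑ n ∈ s, φ n * (g n : ℂ) * charFun n x)
          f₂ atTop ∧
        (∀ x, HasSum (fun n => φ n * (g n : ℂ) * charFun n x) (f₂ x)) ∧
        ∀ x, ‖f₂ x‖ ^ 2 ≤ K ^ 2 * (∑' n, w n ^ (-(2 * τ))) *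
          ∑' n, w n ^ (2 * τ) * ‖φ n‖ ^ 2 := by
  have e1 : ∀ n, (w n ^ (-τ)) ^ (2:ℝ) = w n ^ (-(2 * τ)) := fun n => by
    rw [← Real.rpow_mul (hw n).le]; congr 1; ring
  have e2 : ∀ n, (w n ^ τ * ‖φ n‖) ^ (2:ℝ) = w n ^ (2 * τ) * ‖φ n‖ ^ 2 := fun n => by
    rw [Real.mul_rpow (Real.rpow_nonneg (hw n).le _) (norm_nonneg _), ← Real.rpow_mul (hw n).le,
      mul_comm τ]; norm_num
  have e3 : ∀ n, w n ^ (-τ) * (w n ^ τ * ‖φ n‖) = ‖φ n‖ := fun n => by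
    rw [← mul_assoc, ← Real.rpow_add (hw n)]; simp
  have hH := Real.summable_and_inner_le_Lp_mul_Lq_tsum_of_nonneg (p := 2) (q := 2)
    (f := fun n => w n ^ (-τ)) (g := fun n => w n ^ τ * ‖φ n‖) Real.HolderConjugate.two_two
    (fun n => Real.rpow_nonneg (hw n).le _)
    (fun n => mul_nonneg (Real.rpow_nonneg (hw n).le _) (norm_nonneg _))
    (by simpa only [e1] using hws) (by simpa only [e2] using hφ)
  simp only [e1, e2, e3] at hH
  obtain ⟨hs, hle⟩ := hH
  have hb : ∀ n, ‖φ n * (g n : ℂ)‖ ≤ K * ‖φ n‖ := fun n => by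
    rw [norm_mul, Complex.norm_real, mul_comm]
    exact mul_le_mul_of_nonneg_right (hg n) (norm_nonneg _)
  have hsum : Summable fun n => ‖φ n * (g n : ℂ)‖ :=
    Summable.of_nonneg_of_le (fun _ => norm_nonneg _) hb (hs.mul_left K)
  have hb2 : ∀ n x, ‖φ n * (g n : ℂ) * charFun n x‖ ≤ ‖φ n * (g n : ℂ)‖ := fun n x => by
    rw [norm_mul _ (charFun n x), charFun_norm, mul_one]
  have hu := tendstoUniformly_tsum hsum hb2
  refine ⟨hsum, _, ?_, hu, ?_, ?_⟩
  · exact continuous_tsum (fun n => continuous_const.mul (charFun_cont n)) hsum hb2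
  · intro x
    exact (Summable.of_norm_bounded hsum fun n => hb2 n x).hasSum
  · intro x
    have h1 : ‖∑' n, φ n * (g n : ℂ) * charFun n x‖ ≤ K * ∑' n, ‖φ n‖ := by
      rw [← tsum_mul_left]
      exact tsum_of_norm_bounded (hs.mul_left K).hasSum fun n => (hb2 n x).trans (hb n)
    have n1 : 0 ≤ ∑' n, w n ^ (-(2 * τ)) := tsum_nonneg fun n => Real.rpow_nonneg (hw n).le _
    have n2 : 0 ≤ ∑' n, w n ^ (2 * τ) * ‖φ n‖ ^ 2 := tsum_nonneg fun n =>
      mul_nonneg (Real.rpow_nonneg (hw n).le _) (by positivity)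
    rw [← Real.sqrt_eq_rpow, ← Real.sqrt_eq_rpow] at hle
    have h2 := h1.trans (mul_le_mul_of_nonneg_left hle hK)
    calc _ ≤ (K * (Real.sqrt (∑' n, w n ^ (-(2 * τ))) *
        Real.sqrt (∑' n, w n ^ (2 * τ) * ‖φ n‖ ^ 2))) ^ 2 := by gcongr
      _ = _ := by rw [mul_pow, mul_pow, Real.sq_sqrt n1, Real.sq_sqrt n2]; ring

/-- for `ρ ∈ (0,1]`, `T > 0`, `τ > N/(2m)`, and `φ` with
`Σ (A(n)+1)^{2τ}|φ_n|² < ∞`, the series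
`f²(x) = Σ φ_n E_{ρ,1}(−A(n)T^ρ) / (T^ρ E_{ρ,ρ+1}(−A(n)T^ρ)) e^{inx}` converges
absolutely and uniformly on `𝕋^N` with
`‖f²‖²_{C(𝕋^N)} ≤ (C/T^ρ) Σ (A(n)+1)^{2τ}|φ_n|²`. -/
theorem stmt13 (N m : ℕ) (hN : 0 < N) (hm : 0 < m) (ρ T : ℝ)
    (hρ : 0 < ρ) (hρ1 : ρ ≤ 1) (hT : 0 < T)
    (c₁ c₂ : ℝ) (hc₁ : 0 < c₁) (hc₂ : 0 < c₂)
    (A : (Fin N → ℤ) → ℝ) (hA0 : ∀ n, 0 ≤ A n)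
    (hA : ∀ n, c₁ * Real.sqrt (∑ i, ((n i : ℝ)) ^ 2) ^ (m : ℕ) ≤ A n ∧
               A n ≤ c₂ * Real.sqrt (∑ i, ((n i : ℝ)) ^ 2) ^ (m : ℕ))
    (τ : ℝ) (hτ : (N : ℝ) / (2 * m) < τ) :
    ∃ C : ℝ, 0 < C ∧ ∀ φ : (Fin N → ℤ) → ℂ,
      Summable (fun n => (A n + 1) ^ (2 * τ) * ‖φ n‖ ^ 2) →
      (Summable fun n =>
        ‖φ n * ((mittagLeffler ρ 1 (-A n * T ^ ρ)
            / (T ^ ρ * mittagLeffler ρ (ρ + 1) (-A n * T ^ ρ)) : ℝ) : ℂ)‖) ∧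
      ∃ f₂ : (Fin N → ℝ) → ℂ, Continuous f₂ ∧
        TendstoUniformly
          (fun (s : Finset (Fin N → ℤ)) (x : Fin N → ℝ) =>
            ∑ n ∈ s, φ n * ((mittagLeffler ρ 1 (-A n * T ^ ρ)
              / (T ^ ρ * mittagLeffler ρ (ρ + 1) (-A n * T ^ ρ)) : ℝ) : ℂ) * charFun n x)
          f₂ atTop ∧
        (∀ x, HasSum
          (fun n => φ n * ((mittagLeffler ρ 1 (-A n * T ^ ρ)
            / (T ^ ρ * mittagLeffler ρ (ρ + 1) (-A n * T ^ ρ)) : ℝ) : ℂ) * charFun n x)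
          (f₂ x)) ∧
        ∀ x, ‖f₂ x‖ ^ 2 ≤ (C / T ^ ρ) * ∑' n, (A n + 1) ^ (2 * τ) * ‖φ n‖ ^ 2 := by
  have hTρ : 0 < T ^ ρ := Real.rpow_pos_of_pos hT ρ
  have hΓ : 0 < Real.Gamma (ρ + 1) := Real.Gamma_pos_of_pos (by linarith)
  have hws := weight_summable N m hm c₁ hc₁ A hA0 (fun n => (hA n).1) τ hτ
  have hw : ∀ n, 0 < A n + 1 := fun n => by linarith [hA0 n]
  set K : ℝ := Real.Gamma (ρ + 1) / T ^ ρ with hKdef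
  have hK : 0 ≤ K := by positivity
  have hZ : 0 ≤ ∑' n, (A n + 1) ^ (-(2 * τ)) :=
    tsum_nonneg fun n => Real.rpow_nonneg (hw n).le _
  have hg : ∀ n, |mittagLeffler ρ 1 (-A n * T ^ ρ)
      / (T ^ ρ * mittagLeffler ρ (ρ + 1) (-A n * T ^ ρ))| ≤ K := by
    intro n
    obtain ⟨h1, h2⟩ := ml_ratio hρ hρ1 (mul_nonneg (hA0 n) hTρ.le)
    rw [← neg_mul] at h1 h2
    rw [abs_div, abs_of_pos (mul_pos hTρ h1), hKdef, div_le_div_iff₀ (mul_pos hTρ h1) hTρ]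
    calc _ ≤ Real.Gamma (ρ + 1) * mittagLeffler ρ (ρ + 1) (-A n * T ^ ρ) * T ^ ρ := by gcongr
      _ = _ := by ring
  refine ⟨T ^ ρ * (K ^ 2 * (∑' n, (A n + 1) ^ (-(2 * τ))) + 1), by positivity, fun φ hφ => ?_⟩
  obtain ⟨h1, f₂, h2, h3, h4, h5⟩ := final_step (fun n => A n + 1) τ hw hws
    (fun n => mittagLeffler ρ 1 (-A n * T ^ ρ)
      / (T ^ ρ * mittagLeffler ρ (ρ + 1) (-A n * T ^ ρ))) K hK hg φ hφ
  refine ⟨h1, f₂, h2, h3, h4, fun x => (h5 x).trans ?_⟩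
  rw [mul_div_cancel_left₀ _ hTρ.ne']
  refine mul_le_mul_of_nonneg_right (by linarith) (tsum_nonneg fun n => ?_)
  exact mul_nonneg (Real.rpow_nonneg (hw n).le _) (by positivity)
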